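/- Let k ∈ (0,1) and α ∈ (0, K(k)). Define c₀ := 1 + k² and c := c₀ + 2k(1+k)²·(1 − k·sn(α;k)²)·sn(α;k)·dn(α;k)·cn(α;k) / ( [Z(α;k)·(1 + k·sn(α;k)²) + k·sn(α;k)·dn(α;k)·cn(α;k)]·(1 + k·sn(α;k)²)² ). Then c > c₀; that is, the dark breather propagates faster than the snoidal wave background. -/

import Mathlib

noncomputable section

/-- The complete elliptic integral of the first kind. -/
def Kcomp (k : ℝ) : ℝ :=
  ∫ θ in (0 : ℝ)..(Real.pi / 2), (Real.sqrt (1 - k ^ 2 * Real.sin θ ^ 2))⁻¹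

/-- The complete elliptic integral of the second kind. -/
def Ecomp (k : ℝ) : ℝ :=
  ∫ θ in (0 : ℝ)..(Real.pi / 2), Real.sqrt (1 - k ^ 2 * Real.sin θ ^ 2)

/-- The Jacobi zeta function `Z(α;k) = ∫₀^α dn(t;k)² dt − (E/K)·α`. -/
def Zjac (k : ℝ) (dn : ℝ → ℝ) (α : ℝ) : ℝ :=
  (∫ t in (0 : ℝ)..α, (dn t) ^ 2) - (Ecomp k / Kcomp k) * α

/-!
Let `am x = ∫₀ˣ dn` be the amplitude. The curve `(sn, cn)` turns on the unit circle with angular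
velocity `dn`, so `sn = sin ∘ am` and `cn = cos ∘ am`, while `dn = √(1 - k² sin² am)`. Substituting
`θ = am t` in the elliptic integrals gives `am K = π / 2` and `E = ∫₀ᴷ dn²`. Hence `sn` and `cn` are
positive on `(0, K)`, so `dn' = -k² sn cn` is negative there and `dn²` decreases. Since `E / K` is
the mean of `dn²` over `[0, K]`, which is at most its mean over `[0, α]`, it follows that
`Z(α) ≥ 0`, and every factor of `c - c₀` is positive.
-/

section Calculus

theorem eq_of_hasDerivAt_zero {𝕜 G : Type*} [RCLike 𝕜] [NormedAddCommGroup G] [NormedSpace 𝕜 G]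
    {f : 𝕜 → G} (hf : ∀ x, HasDerivAt f 0 x) (x y : 𝕜) : f x = f y :=
  is_const_of_deriv_eq_zero (fun z => (hf z).differentiableAt) (fun z => (hf z).deriv) x y

theorem eq_sin_and_eq_cos_of_hasDerivAt {s c θ ω : ℝ → ℝ}
    (hs : ∀ x, HasDerivAt s (c x * ω x) x) (hc : ∀ x, HasDerivAt c (-(s x * ω x)) x)
    (hθ : ∀ x, HasDerivAt θ (ω x) x) {a : ℝ} (hsa : s a = Real.sin (θ a))
    (hca : c a = Real.cos (θ a)) (x : ℝ) : s x = Real.sin (θ x) ∧ c x = Real.cos (θ x) := by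
  have hasDerivAt_dist_sq : ∀ y, HasDerivAt
      (fun z => (s z - Real.sin (θ z)) ^ 2 + (c z - Real.cos (θ z)) ^ 2) 0 y := fun y => by
    refine ((((hs y).sub (hθ y).sin).pow 2).add (((hc y).sub (hθ y).cos).pow 2)).congr_deriv ?_
    simp only [Pi.sub_apply]
    ring
  have dist_sq_eq_zero : (s x - Real.sin (θ x)) ^ 2 + (c x - Real.cos (θ x)) ^ 2 = 0 := by
    simpa [hsa, hca] using eq_of_hasDerivAt_zero hasDerivAt_dist_sq x a
  rw [add_eq_zero_iff_of_nonneg (sq_nonneg _) (sq_nonneg _)] at dist_sq_eq_zero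
  simpa [sub_eq_zero] using dist_sq_eq_zero

theorem sub_mul_integral_le_of_antitoneOn {f : ℝ → ℝ} {a b c : ℝ}
    (hf : AntitoneOn f (Set.Icc a b)) (hc : c ∈ Set.Icc a b) :
    (c - a) * ∫ t in a..b, f t ≤ (b - a) * ∫ t in a..c, f t := by
  obtain ⟨hac, hcb⟩ := hc
  have hf_left : AntitoneOn f (Set.Icc a c) := hf.mono (Set.Icc_subset_Icc_right hcb)
  have hf_right : AntitoneOn f (Set.Icc c b) := hf.mono (Set.Icc_subset_Icc_left hac)
  have int_left : IntervalIntegrable f MeasureTheory.volume a c :=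
    AntitoneOn.intervalIntegrable (by rwa [Set.uIcc_of_le hac])
  have int_right : IntervalIntegrable f MeasureTheory.volume c b :=
    AntitoneOn.intervalIntegrable (by rwa [Set.uIcc_of_le hcb])
  have left_ge : (c - a) * f c ≤ ∫ t in a..c, f t := by
    simpa using intervalIntegral.integral_mono_on hac intervalIntegrable_const int_left
      fun t ht => hf_left ht (Set.right_mem_Icc.2 hac) ht.2
  have right_le : ∫ t in c..b, f t ≤ (b - c) * f c := by
    simpa using intervalIntegral.integral_mono_on hcb int_right intervalIntegrable_const
      fun t ht => hf_right (Set.left_mem_Icc.2 hcb) ht ht.1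
  calc (c - a) * ∫ t in a..b, f t
      = (c - a) * (∫ t in a..c, f t) + (c - a) * ∫ t in c..b, f t := by
        rw [← intervalIntegral.integral_add_adjacent_intervals int_left int_right, mul_add]
    _ ≤ (c - a) * (∫ t in a..c, f t) + (c - a) * ((b - c) * f c) := by
        have := sub_nonneg.2 hac
        gcongr
    _ = (c - a) * (∫ t in a..c, f t) + (b - c) * ((c - a) * f c) := by ring
    _ ≤ (c - a) * (∫ t in a..c, f t) + (b - c) * ∫ t in a..c, f t := by
        have := sub_nonneg.2 hcb
        gcongr
    _ = (b - a) * ∫ t in a..c, f t := by ring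

end Calculus

section EllipticIntegrals

/-- The incomplete elliptic integral of the first kind `F(φ; k)`, so that `Kcomp k` is its value
at `φ = π / 2`. -/
def ellipticF (k φ : ℝ) : ℝ :=
  ∫ θ in (0 : ℝ)..φ, (Real.sqrt (1 - k ^ 2 * Real.sin θ ^ 2))⁻¹

variable {k : ℝ}

theorem one_sub_sq_mul_sin_sq_pos (hk : |k| < 1) (θ : ℝ) : 0 < 1 - k ^ 2 * Real.sin θ ^ 2 := by
  have hk2 : k ^ 2 < 1 := (sq_lt_one_iff_abs_lt_one k).2 hk
  nlinarith [Real.sin_sq_le_one θ, sq_nonneg k]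

theorem continuous_inv_sqrt_one_sub_sq_mul_sin_sq (hk : |k| < 1) :
    Continuous fun θ : ℝ => (Real.sqrt (1 - k ^ 2 * Real.sin θ ^ 2))⁻¹ :=
  Continuous.inv₀ (by fun_prop) fun θ => (Real.sqrt_pos.2 (one_sub_sq_mul_sin_sq_pos hk θ)).ne'

theorem ellipticF_strictMono (hk : |k| < 1) : StrictMono (ellipticF k) :=
  strictMono_of_hasDerivAt_pos
    (fun φ => ((continuous_inv_sqrt_one_sub_sq_mul_sin_sq hk).integral_hasStrictDerivAt
      0 φ).hasDerivAt)
    fun φ => inv_pos.2 (Real.sqrt_pos.2 (one_sub_sq_mul_sin_sq_pos hk φ))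

theorem Kcomp_pos (hk : |k| < 1) : 0 < Kcomp k := by
  simpa [ellipticF, Kcomp] using ellipticF_strictMono hk Real.pi_div_two_pos

end EllipticIntegrals

/-- The Jacobi amplitude `am`, the angle on the unit circle whose angular velocity is `dn`. -/
def amplitude (dn : ℝ → ℝ) (x : ℝ) : ℝ :=
  ∫ t in (0 : ℝ)..x, dn t

theorem amplitude_zero (dn : ℝ → ℝ) : amplitude dn 0 = 0 :=
  intervalIntegral.integral_same

/-- `(sn, cn, dn)` are the Jacobi elliptic functions of modulus `k`, characterised by the
initial value problem they solve. -/
structure IsJacobiTriple (k : ℝ) (sn cn dn : ℝ → ℝ) : Prop where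
  hasDerivAt_sn : ∀ x, HasDerivAt sn (cn x * dn x) x
  hasDerivAt_cn : ∀ x, HasDerivAt cn (-(sn x * dn x)) x
  hasDerivAt_dn : ∀ x, HasDerivAt dn (-(k ^ 2 * sn x * cn x)) x
  sn_zero : sn 0 = 0
  cn_zero : cn 0 = 1
  dn_zero : dn 0 = 1

namespace IsJacobiTriple

variable {k : ℝ} {sn cn dn : ℝ → ℝ}

theorem continuous_dn (h : IsJacobiTriple k sn cn dn) : Continuous dn :=
  continuous_iff_continuousAt.2 fun x => (h.hasDerivAt_dn x).continuousAt

theorem hasDerivAt_amplitude (h : IsJacobiTriple k sn cn dn) (x : ℝ) :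
    HasDerivAt (amplitude dn) (dn x) x :=
  (h.continuous_dn.integral_hasStrictDerivAt 0 x).hasDerivAt

theorem sn_eq_sin_and_cn_eq_cos (h : IsJacobiTriple k sn cn dn) (x : ℝ) :
    sn x = Real.sin (amplitude dn x) ∧ cn x = Real.cos (amplitude dn x) :=
  eq_sin_and_eq_cos_of_hasDerivAt h.hasDerivAt_sn h.hasDerivAt_cn h.hasDerivAt_amplitude
    (a := 0) (by simp [h.sn_zero, amplitude_zero]) (by simp [h.cn_zero, amplitude_zero]) x

theorem sn_eq_sin (h : IsJacobiTriple k sn cn dn) (x : ℝ) : sn x = Real.sin (amplitude dn x) :=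
  (h.sn_eq_sin_and_cn_eq_cos x).1

theorem cn_eq_cos (h : IsJacobiTriple k sn cn dn) (x : ℝ) : cn x = Real.cos (amplitude dn x) :=
  (h.sn_eq_sin_and_cn_eq_cos x).2

theorem dn_sq_eq (h : IsJacobiTriple k sn cn dn) (x : ℝ) : dn x ^ 2 = 1 - k ^ 2 * sn x ^ 2 := by
  have hasDerivAt_energy : ∀ y, HasDerivAt (fun z => dn z ^ 2 + k ^ 2 * sn z ^ 2) 0 y := fun y => by
    refine (((h.hasDerivAt_dn y).pow 2).add
      (((h.hasDerivAt_sn y).pow 2).const_mul (k ^ 2))).congr_deriv ?_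
    ring
  have energy_eq_one : dn x ^ 2 + k ^ 2 * sn x ^ 2 = 1 := by
    simpa [h.sn_zero, h.dn_zero] using eq_of_hasDerivAt_zero hasDerivAt_energy x 0
  linarith

theorem dn_pos (h : IsJacobiTriple k sn cn dn) (hk : |k| < 1) (x : ℝ) : 0 < dn x := by
  have dn_ne_zero : ∀ y, dn y ≠ 0 := fun y => by
    rw [← sq_pos_iff, h.dn_sq_eq, h.sn_eq_sin]
    exact one_sub_sq_mul_sin_sq_pos hk _
  by_contra! dn_nonpos
  obtain ⟨y, hy⟩ : (0 : ℝ) ∈ Set.range dn :=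
    mem_range_of_exists_le_of_exists_ge h.continuous_dn ⟨x, dn_nonpos⟩
      ⟨0, h.dn_zero ▸ zero_le_one⟩
  exact dn_ne_zero y hy

theorem sqrt_one_sub_sq_mul_sin_amplitude_sq (h : IsJacobiTriple k sn cn dn) (hk : |k| < 1)
    (x : ℝ) : Real.sqrt (1 - k ^ 2 * Real.sin (amplitude dn x) ^ 2) = dn x := by
  rw [← h.sn_eq_sin, ← h.dn_sq_eq, Real.sqrt_sq (h.dn_pos hk x).le]

theorem amplitude_strictMono (h : IsJacobiTriple k sn cn dn) (hk : |k| < 1) :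
    StrictMono (amplitude dn) :=
  strictMono_of_hasDerivAt_pos h.hasDerivAt_amplitude (h.dn_pos hk)

theorem integral_comp_amplitude_mul_dn (h : IsJacobiTriple k sn cn dn) {g : ℝ → ℝ}
    (hg : Continuous g) (x : ℝ) :
    ∫ t in (0 : ℝ)..x, g (amplitude dn t) * dn t = ∫ θ in (0 : ℝ)..amplitude dn x, g θ := by
  simpa [amplitude_zero] using intervalIntegral.integral_comp_mul_deriv (a := 0) (b := x)
    (fun t _ => h.hasDerivAt_amplitude t) h.continuous_dn.continuousOn hg

theorem ellipticF_amplitude (h : IsJacobiTriple k sn cn dn) (hk : |k| < 1) (x : ℝ) :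
    ellipticF k (amplitude dn x) = x := by
  rw [ellipticF,
    ← h.integral_comp_amplitude_mul_dn (continuous_inv_sqrt_one_sub_sq_mul_sin_sq hk)]
  simp [h.sqrt_one_sub_sq_mul_sin_amplitude_sq hk, (h.dn_pos hk _).ne']

theorem amplitude_Kcomp (h : IsJacobiTriple k sn cn dn) (hk : |k| < 1) :
    amplitude dn (Kcomp k) = Real.pi / 2 :=
  (ellipticF_strictMono hk).injective (h.ellipticF_amplitude hk (Kcomp k))

theorem integral_dn_sq_Kcomp (h : IsJacobiTriple k sn cn dn) (hk : |k| < 1) :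
    ∫ t in (0 : ℝ)..Kcomp k, dn t ^ 2 = Ecomp k := by
  rw [Ecomp, ← h.amplitude_Kcomp hk, ← h.integral_comp_amplitude_mul_dn (by fun_prop)]
  simp only [h.sqrt_one_sub_sq_mul_sin_amplitude_sq hk, ← sq]

theorem amplitude_mem_Ioo (h : IsJacobiTriple k sn cn dn) (hk : |k| < 1) {x : ℝ}
    (hx : x ∈ Set.Ioo 0 (Kcomp k)) : amplitude dn x ∈ Set.Ioo 0 (Real.pi / 2) := by
  rw [← amplitude_zero dn, ← h.amplitude_Kcomp hk]
  exact ⟨h.amplitude_strictMono hk hx.1, h.amplitude_strictMono hk hx.2⟩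

theorem sn_pos (h : IsJacobiTriple k sn cn dn) (hk : |k| < 1) {x : ℝ}
    (hx : x ∈ Set.Ioo 0 (Kcomp k)) : 0 < sn x := by
  obtain ⟨am_pos, am_lt⟩ := h.amplitude_mem_Ioo hk hx
  rw [h.sn_eq_sin]
  exact Real.sin_pos_of_pos_of_lt_pi am_pos (by linarith)

theorem cn_pos (h : IsJacobiTriple k sn cn dn) (hk : |k| < 1) {x : ℝ}
    (hx : x ∈ Set.Ioo 0 (Kcomp k)) : 0 < cn x := by
  obtain ⟨am_pos, am_lt⟩ := h.amplitude_mem_Ioo hk hx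
  rw [h.cn_eq_cos]
  exact Real.cos_pos_of_mem_Ioo ⟨by linarith, am_lt⟩

theorem antitoneOn_dn (h : IsJacobiTriple k sn cn dn) (hk : |k| < 1) :
    AntitoneOn dn (Set.Icc 0 (Kcomp k)) := by
  refine antitoneOn_of_hasDerivWithinAt_nonpos (convex_Icc _ _) h.continuous_dn.continuousOn
    (fun x _ => (h.hasDerivAt_dn x).hasDerivWithinAt) fun x hx => ?_
  rw [interior_Icc] at hx
  have := h.sn_pos hk hx
  have := h.cn_pos hk hx
  exact neg_nonpos.2 (by positivity)

theorem Zjac_nonneg (h : IsJacobiTriple k sn cn dn) (hk : |k| < 1) {α : ℝ}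
    (hα : α ∈ Set.Icc 0 (Kcomp k)) : 0 ≤ Zjac k dn α := by
  have antitoneOn_dn_sq : AntitoneOn (fun t => dn t ^ 2) (Set.Icc 0 (Kcomp k)) :=
    fun x hx y hy hxy => pow_le_pow_left₀ (h.dn_pos hk y).le (h.antitoneOn_dn hk hx hy hxy) 2
  have mean_le : α * Ecomp k ≤ Kcomp k * ∫ t in (0 : ℝ)..α, dn t ^ 2 := by
    simpa [h.integral_dn_sq_Kcomp hk] using sub_mul_integral_le_of_antitoneOn antitoneOn_dn_sq hα
  rw [Zjac, sub_nonneg, div_mul_eq_mul_div, div_le_iff₀ (Kcomp_pos hk)]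
  linarith

end IsJacobiTriple

/-- The dark breather propagates faster than the snoidal background: with `c₀ = 1 + k²`,
the breather speed `c` exceeds `c₀` for every `α ∈ (0, K(k))`. -/
theorem breather_speed_exceeds_background
    (k : ℝ) (hk : k ∈ Set.Ioo (0 : ℝ) 1)
    (sn cn dn : ℝ → ℝ)
    (hsn : ∀ x, HasDerivAt sn (cn x * dn x) x)
    (hcn : ∀ x, HasDerivAt cn (-(sn x * dn x)) x)
    (hdn : ∀ x, HasDerivAt dn (-(k ^ 2 * sn x * cn x)) x)
    (hsn0 : sn 0 = 0) (hcn0 : cn 0 = 1) (hdn0 : dn 0 = 1)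
    (α : ℝ) (hα : α ∈ Set.Ioo 0 (Kcomp k)) :
    (1 + k ^ 2) <
      (1 + k ^ 2) +
        2 * k * (1 + k) ^ 2 * (1 - k * (sn α) ^ 2) * sn α * dn α * cn α /
          ((Zjac k dn α * (1 + k * (sn α) ^ 2) + k * sn α * dn α * cn α) *
            (1 + k * (sn α) ^ 2) ^ 2) := by
  have h : IsJacobiTriple k sn cn dn := ⟨hsn, hcn, hdn, hsn0, hcn0, hdn0⟩
  obtain ⟨k_pos, k_lt_one⟩ := hk
  have abs_k_lt_one : |k| < 1 := by rwa [abs_of_pos k_pos]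
  have sn_pos : 0 < sn α := h.sn_pos abs_k_lt_one hα
  have cn_pos : 0 < cn α := h.cn_pos abs_k_lt_one hα
  have dn_pos : 0 < dn α := h.dn_pos abs_k_lt_one α
  have Z_nonneg : 0 ≤ Zjac k dn α := h.Zjac_nonneg abs_k_lt_one (Set.Ioo_subset_Icc_self hα)
  have one_sub_pos : 0 < 1 - k * sn α ^ 2 := by
    have sn_sq_le_one : sn α ^ 2 ≤ 1 := h.sn_eq_sin α ▸ Real.sin_sq_le_one _
    nlinarith
  exact lt_add_of_pos_right _ (by positivity)

end
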